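/- Let n and r be integers with 3 ≤ r ≤ n − 3, and let f_inv : F → 𝔽₂ be defined by f_inv(x) = tr(x^{2^n − 2}). Then nl_r(f_inv) ≥ 2^{n−1} − 2^{(1 − 2^{−r})·n − 2^{−(r−1)}} − 3·2^{(1/2 − 2^{−r})·n}. -/

import Mathlib

noncomputable section

/-- `Fq n` is the finite field with `2 ^ n` elements. -/
abbrev Fq (n : ℕ) : Type := GaloisField 2 n

/-- The absolute trace map `tr x = x + x^2 + x^4 + ⋯ + x^(2^(n-1))` from `Fq n` to `𝔽₂`. -/
def tr {n : ℕ} (x : Fq n) : ZMod 2 := Algebra.trace (ZMod 2) (Fq n) x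

/-- The derivative of `f` with respect to `a`. -/
def der {n : ℕ} (f : Fq n → ZMod 2) (a : Fq n) : Fq n → ZMod 2 :=
  fun x => f x + f (x + a)

/-- Iterated derivatives along a list of directions (head applied last/outermost). -/
def derIter {n : ℕ} (f : Fq n → ZMod 2) : List (Fq n) → (Fq n → ZMod 2)
  | [] => f
  | a :: as => der (derIter f as) a

/-- `g` has algebraic degree at most `r`: all `(r+1)`-th order derivatives vanish. -/
def degLE {n : ℕ} (g : Fq n → ZMod 2) (r : ℕ) : Prop :=
  ∀ l : List (Fq n), l.length = r + 1 → derIter g l = fun _ => 0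

/-- Hamming distance between two Boolean functions on `Fq n`. -/
def hdist {n : ℕ} (f g : Fq n → ZMod 2) : ℕ :=
  {x : Fq n | f x ≠ g x}.ncard

/-- The `r`-th order nonlinearity of `f`. -/
def nl {n : ℕ} (r : ℕ) (f : Fq n → ZMod 2) : ℕ :=
  sInf {d : ℕ | ∃ g : Fq n → ZMod 2, degLE g r ∧ d = hdist f g}

/-- The linear kernel of `f`: directions along which the derivative is constant. -/
def linKer {n : ℕ} (f : Fq n → ZMod 2) : Set (Fq n) :=
  {b | ∃ c : ZMod 2, ∀ x, der f b x = c}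

/-- The weight of a Boolean function on `Fq n`. -/
def wt {n : ℕ} (f : Fq n → ZMod 2) : ℕ := {x : Fq n | f x = 1}.ncard

/-!
The derivatives of `tr (b / L x)`, with `L` an additive map, have the same shape: in the direction
`a` one gets `tr (b L(a) / (L x (L x + L a)))`, whose denominator is again additive in `x`, with a
kernel at most twice as large. Every derivative also lowers the degree of the approximating
function `p`, while `(∑ (-1) ^ h x)² = ∑ₐ ∑ₓ (-1) ^ D_a h x` and Hölder's inequality bound the sum
of `h = f + p` by those of its derivatives, so after `r - 1` derivations `p` has become affine.

The remaining sums of `(-1) ^ (tr (b / L x) + ℓ x)`, with `ℓ` additive, are bounded by Fourier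
expansion in terms of Kloosterman sums over `𝔽_q`, for which we need Weil's bound `2 √q`. Stepanov's
method, applied to `y² + y = a x + b / x + δ` over fields of square order, gives the one-sided bound
`-4 √q`. If `K` and `K'` denote the sums over a field of order `q` and its quadratic extension, then
`K' + K² = 2 q`: in each fibre, the traces and norms upstairs complement the sums and products
downstairs. A lower bound for `K'` is thus an upper bound for `|K|`, and iterating along a tower
of quadratic extensions improves the constant to the limit `2`.
-/

open Polynomial

section MonomialSum

variable {R ι : Type*} [CommRing R] [Fintype ι]

/-- The polynomial `∑ i, c i * X ^ e i` with prescribed exponents `e`, as a linear function of its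
coefficient vector `c`. -/
def monomialSum (e : ι → ℕ) : (ι → R) →ₗ[R] R[X] :=
  Fintype.linearCombination R fun i ↦ X ^ e i

lemma monomialSum_apply (e : ι → ℕ) (c : ι → R) :
    monomialSum e c = ∑ i, C (c i) * X ^ e i := by
  simp [monomialSum, Fintype.linearCombination_apply, smul_eq_C_mul]

lemma eval_monomialSum (e : ι → ℕ) (c : ι → R) (x : R) :
    (monomialSum e c).eval x = ∑ i, c i * x ^ e i := by
  simp [monomialSum_apply, eval_finsetSum]

lemma monomialSum_injective {e : ι → ℕ} (he : Function.Injective e) :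
    Function.Injective (monomialSum (R := R) e) := by
  refine LinearIndependent.fintypeLinearCombination_injective ?_
  simpa [Function.comp_def, ← X_pow_eq_monomial] using
    (basisMonomials R).linearIndependent.comp e he

lemma natDegree_monomialSum_le {e : ι → ℕ} {D : ℕ} (he : ∀ i, e i ≤ D) (c : ι → R) :
    (monomialSum e c).natDegree ≤ D := by
  rw [monomialSum_apply]
  exact natDegree_sum_le_of_forall_le _ _ fun i _ ↦ (natDegree_C_mul_X_pow_le _ _).trans (he i)

lemma exists_natDegree_monomialSum_eq {e : ι → ℕ} {c : ι → R} (hc : monomialSum e c ≠ 0) :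
    ∃ i, (monomialSum e c).natDegree = e i := by
  by_contra! hne
  refine hc (leadingCoeff_eq_zero.mp ?_)
  rw [leadingCoeff, monomialSum_apply, finsetSum_coeff]
  refine Finset.sum_eq_zero fun i _ ↦ ?_
  rw [coeff_C_mul_X_pow, if_neg (monomialSum_apply e c ▸ hne i)]

end MonomialSum

section DigitPolynomial

variable {k : Type*} [Field k] {h s : ℕ}

/-- The polynomial `∑ c (i, j) * X ^ (i * s + j)` over `i ≤ h` and `j < h`: its exponents have
two digits in base `s`, the last one being less than `h`. -/
def digitPoly (h s : ℕ) : (Fin (h + 1) × Fin h → k) →ₗ[k] k[X] :=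
  monomialSum fun i ↦ i.1 * s + i.2

/-- The polynomial `∑ c (i, j) * X ^ (i + j * s)` over `i ≤ h` and `j < h`, obtained from
`digitPoly` by exchanging the two base `s` digits of the exponents. -/
def swappedDigitPoly (h s : ℕ) : (Fin (h + 1) × Fin h → k) →ₗ[k] k[X] :=
  monomialSum fun i ↦ i.1 + i.2 * s

lemma digitPoly_injective (hs : h ≤ s) : Function.Injective (digitPoly (k := k) h s) := by
  refine monomialSum_injective fun ⟨i, j⟩ ⟨i', j'⟩ hij ↦ ?_
  have hj : (j : ℕ) = j' := by
    simpa [Nat.mod_eq_of_lt (j.2.trans_le hs), Nat.mod_eq_of_lt (j'.2.trans_le hs)]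
      using congrArg (· % s) hij
  have hi : (i : ℕ) = i' :=
    Nat.eq_of_mul_eq_mul_right (j.pos.trans_le hs) (by simpa [hj] using hij)
  exact Prod.ext (Fin.ext hi) (Fin.ext hj)

lemma natDegree_digitPoly_le (c : Fin (h + 1) × Fin h → k) :
    (digitPoly h s c).natDegree ≤ h * s + h :=
  natDegree_monomialSum_le
    (fun i ↦ add_le_add (Nat.mul_le_mul_right s (Nat.le_of_lt_succ i.1.2)) i.2.2.le) c

lemma natDegree_digitPoly_mod_lt (hh : 0 < h) (hs : h ≤ s) (c : Fin (h + 1) × Fin h → k) :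
    (digitPoly h s c).natDegree % s < h := by
  rcases eq_or_ne (digitPoly h s c) 0 with h0 | hne
  · simpa [h0] using hh
  · obtain ⟨i, hi⟩ := exists_natDegree_monomialSum_eq hne
    rw [digitPoly, hi, Nat.mul_add_mod_self_right, Nat.mod_eq_of_lt (i.2.2.trans_le hs)]
    exact i.2.2

lemma natDegree_swappedDigitPoly_le (c : Fin (h + 1) × Fin h → k) :
    (swappedDigitPoly h s c).natDegree ≤ h + (h - 1) * s :=
  natDegree_monomialSum_le (fun i ↦ add_le_add (Nat.le_of_lt_succ i.1.2)
    (Nat.mul_le_mul_right s (Nat.le_sub_one_of_lt i.2.2))) c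

lemma eval_digitPoly_pow [Fintype k] {p m : ℕ} [Fact p.Prime] [CharP k p]
    (hk : Fintype.card k = (p ^ m) ^ 2) (c : Fin (h + 1) × Fin h → k) (x : k) :
    (digitPoly h (p ^ m) fun i ↦ c i ^ p ^ m).eval x ^ p ^ m =
      (swappedDigitPoly h (p ^ m) c).eval x := by
  have frob_frob (z : k) : (z ^ p ^ m) ^ p ^ m = z := by
    rw [← pow_mul, ← sq, ← hk, FiniteField.pow_card]
  simp only [digitPoly, swappedDigitPoly, eval_monomialSum, sum_pow_char_pow]
  refine Finset.sum_congr rfl fun i _ ↦ ?_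
  rw [mul_pow, frob_frob, pow_add, mul_pow, pow_mul, frob_frob, pow_add, ← pow_mul x i.2]

/-- The two summands cannot cancel: modulo `2 * h` the degree of the first one lies in `[h, 2 * h)`
and the degree of the second one in `[0, h)`. -/
lemma eq_zero_of_X_pow_mul_digitPoly_add_mul_digitPoly_eq_zero (hh : 0 < h) (hs : s = 2 * h)
    {τ : k[X]} (hτ : τ.natDegree = s) {u v : Fin (h + 1) × Fin h → k}
    (huv : X ^ h * digitPoly h s u + τ * digitPoly h s v = 0) : u = 0 ∧ v = 0 := by
  have hτ0 : τ ≠ 0 := ne_zero_of_natDegree_gt (n := 0) (by omega)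
  have hX : (X ^ h : k[X]) ≠ 0 := pow_ne_zero _ X_ne_zero
  have hinj := digitPoly_injective (k := k) (by omega : h ≤ s)
  have hv : v = 0 := by
    by_contra hv
    have hv0 : digitPoly h s v ≠ 0 := (map_ne_zero_iff _ hinj).mpr hv
    have hu0 : digitPoly h s u ≠ 0 := fun hu0 ↦ by simp [hu0, hτ0, hv0] at huv
    have hdeg : h + (digitPoly h s u).natDegree = s + (digitPoly h s v).natDegree := by
      simpa [natDegree_mul, hX, hu0, hτ0, hv0, hτ] using
        congrArg natDegree (eq_neg_of_add_eq_zero_left huv)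
    have hmod : (h + (digitPoly h s u).natDegree) % s = (digitPoly h s v).natDegree % s := by
      rw [hdeg, Nat.add_mod_left]
    have hu_mod := natDegree_digitPoly_mod_lt hh (by omega : h ≤ s) u
    have hv_mod := natDegree_digitPoly_mod_lt hh (by omega : h ≤ s) v
    rw [Nat.add_mod, Nat.mod_eq_of_lt (by omega : h < s), Nat.mod_eq_of_lt (by omega)] at hmod
    omega
  refine ⟨?_, hv⟩
  simpa [hv, hX, map_eq_zero_iff _ hinj] using huv

end DigitPolynomial

lemma exists_ne_zero_forall_eq_zero_of_natDegree_lt {k V ι : Type*} [Field k] [AddCommGroup V]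
    [Module k V] [FiniteDimensional k V] [Fintype ι] {N : ℕ} (T : ι → V →ₗ[k] k[X])
    (hT : ∀ i v, (T i v).natDegree < N) (hN : Fintype.card ι * N < Module.finrank k V) :
    ∃ v ≠ 0, ∀ i, T i v = 0 := by
  have hmem (i : ι) (v : V) : T i v ∈ degreeLT k N :=
    mem_degreeLT.mpr (degree_le_natDegree.trans_lt (Nat.cast_lt.mpr (hT i v)))
  let Φ : V →ₗ[k] ι → degreeLT k N := LinearMap.pi fun i ↦ (T i).codRestrict _ (hmem i)
  have hfinrank : Module.finrank k (ι → degreeLT k N) < Module.finrank k V := by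
    simpa [Module.finrank_pi_fintype, (degreeLTEquiv k N).finrank_eq] using hN
  obtain ⟨v, hv, hv0⟩ := Submodule.exists_mem_ne_zero_of_ne_bot
    (LinearMap.ker_ne_bot_of_finrank_lt (f := Φ) hfinrank)
  exact ⟨v, hv0, fun i ↦ congrArg Subtype.val (congrFun (LinearMap.mem_ker.mp hv) i)⟩

section Stepanov

variable {k : Type*} [Field k] (d : ℕ) (a b δ : k)

/-- The polynomial `a X² + δ X + b`, which takes the value `x (y² + y)` at every point `(x, y)`
of the curve `y² + y = a x + b / x + δ`. -/
def curvePoly : k[X] := C a * X ^ 2 + C δ * X + C b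

/-- A polynomial taking the value `x ^ (2 ^ d) * (y ^ (2 ^ (d + 1)) + y)` at every point `(x, y)`
of the curve `y² + y = a x + b / x + δ`. -/
def curveFrobPoly : k[X] :=
  ∑ j ∈ Finset.range (d + 1), curvePoly a b δ ^ 2 ^ j * X ^ (2 ^ d - 2 ^ j)

/-- On the curve `y² + y = a x + b / x + δ`, the function
`x ^ (2 ^ d) * ∑ i, ∑ j, G i j * y ^ i * (y ^ (2 ^ (d + 1))) ^ j` can be written as `u + v * y`
with polynomials `u` and `v` in `x`; this is the linear map sending `G` to `![u, v]`. -/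
def curveNormalForm : (Fin 2 → Fin 2 → k[X]) →ₗ[k[X]] (Fin 2 → k[X]) where
  toFun G := ![
    X ^ 2 ^ d * G 0 0 + curveFrobPoly d a b δ * G 0 1
      + curvePoly a b δ * X ^ (2 ^ d - 1) * G 1 1,
    X ^ 2 ^ d * (G 0 1 + G 1 0 + G 1 1) + curveFrobPoly d a b δ * G 1 1]
  map_add' G H := by
    ext1 l
    fin_cases l <;> simp <;> ring
  map_smul' p G := by
    ext1 l
    fin_cases l <;> simp <;> ring

variable {a} in
lemma natDegree_curvePoly (ha : a ≠ 0) : (curvePoly a b δ).natDegree = 2 :=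
  natDegree_quadratic ha

variable {a} in
lemma natDegree_curveFrobPoly (ha : a ≠ 0) : (curveFrobPoly d a b δ).natDegree = 2 ^ (d + 1) := by
  have hlower : (∑ j ∈ Finset.range d,
      curvePoly a b δ ^ 2 ^ j * X ^ (2 ^ d - 2 ^ j)).natDegree < 2 ^ (d + 1) := by
    refine (natDegree_sum_le_of_forall_le (n := 2 ^ (d + 1) - 1) _ _ fun j hj ↦ ?_).trans_lt
      (Nat.sub_one_lt (by positivity))
    have hlt : 2 ^ j < 2 ^ d := Nat.pow_lt_pow_right one_lt_two (Finset.mem_range.mp hj)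
    refine natDegree_mul_le.trans ?_
    rw [natDegree_pow, natDegree_curvePoly b δ ha, natDegree_X_pow, pow_succ]
    omega
  have htop : (curvePoly a b δ ^ 2 ^ d).natDegree = 2 ^ (d + 1) := by
    rw [natDegree_pow, natDegree_curvePoly b δ ha, pow_succ]
  rw [curveFrobPoly, Finset.sum_range_succ, Nat.sub_self, pow_zero, mul_one,
    natDegree_add_eq_right_of_natDegree_lt (htop ▸ hlower), htop]

variable {a} in
lemma natDegree_curveNormalForm_le (ha : a ≠ 0) {D : ℕ} {G : Fin 2 → Fin 2 → k[X]}
    (hG : ∀ i j, (G i j).natDegree ≤ D) (l : Fin 2) :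
    (curveNormalForm d a b δ G l).natDegree ≤ 2 ^ (d + 1) + D := by
  have hpos : 0 < 2 ^ d := by positivity
  have hX : (X ^ 2 ^ d : k[X]).natDegree ≤ 2 ^ (d + 1) := by
    rw [natDegree_X_pow, pow_succ]
    omega
  have hfrob := (natDegree_curveFrobPoly d b δ ha).le
  have hcurve : (curvePoly a b δ * X ^ (2 ^ d - 1)).natDegree ≤ 2 ^ (d + 1) := by
    refine natDegree_mul_le.trans ?_
    rw [natDegree_curvePoly b δ ha, natDegree_X_pow, pow_succ]
    omega
  have hlin := natDegree_add_le_of_degree_le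
    (natDegree_add_le_of_degree_le (hG 0 1) (hG 1 0)) (hG 1 1)
  fin_cases l
  · exact natDegree_add_le_of_degree_le (natDegree_add_le_of_degree_le
      (natDegree_mul_le_of_le hX (hG 0 0)) (natDegree_mul_le_of_le hfrob (hG 0 1)))
      (natDegree_mul_le_of_le hcurve (hG 1 1))
  · exact natDegree_add_le_of_degree_le (natDegree_mul_le_of_le hX hlin)
      (natDegree_mul_le_of_le hfrob (hG 1 1))

variable {a b δ}

lemma eval_curvePoly {x y : k} (hx : x ≠ 0) (hxy : y ^ 2 + y = a * x + b / x + δ) :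
    (curvePoly a b δ).eval x = x * (y ^ 2 + y) := by
  simp only [curvePoly, eval_add, eval_mul, eval_pow, eval_X, eval_C, hxy]
  field

lemma sum_range_sq_add_self_pow_two_pow [CharP k 2] (y : k) (n : ℕ) :
    ∑ j ∈ Finset.range n, (y ^ 2 + y) ^ 2 ^ j = y ^ 2 ^ n + y := by
  simp_rw [add_pow_char_pow, ← pow_mul, ← pow_succ',
    ← CharTwo.sub_eq_add]
  rw [Finset.sum_range_sub (fun j ↦ y ^ 2 ^ j), pow_zero, pow_one]

lemma eval_curveFrobPoly [CharP k 2] {x y : k} (hx : x ≠ 0)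
    (hxy : y ^ 2 + y = a * x + b / x + δ) :
    (curveFrobPoly d a b δ).eval x = x ^ 2 ^ d * (y ^ 2 ^ (d + 1) + y) := by
  rw [curveFrobPoly, eval_finsetSum, ← sum_range_sq_add_self_pow_two_pow, Finset.mul_sum]
  refine Finset.sum_congr rfl fun j hj ↦ ?_
  have hj : 2 ^ j ≤ 2 ^ d := Nat.pow_le_pow_right two_pos (Finset.mem_range_succ_iff.mp hj)
  rw [eval_mul, eval_pow, eval_curvePoly hx hxy, mul_pow, eval_pow, eval_X, mul_right_comm,
    ← pow_add, Nat.add_sub_cancel' hj]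

lemma eval_curveNormalForm [CharP k 2] {x y : k} (hx : x ≠ 0)
    (hxy : y ^ 2 + y = a * x + b / x + δ) (G : Fin 2 → Fin 2 → k[X]) :
    (curveNormalForm d a b δ G 0).eval x + (curveNormalForm d a b δ G 1).eval x * y =
      x ^ 2 ^ d * ∑ i, ∑ j, (G i j).eval x * y ^ (i : ℕ) * (y ^ 2 ^ (d + 1)) ^ (j : ℕ) := by
  have hcurve : (curvePoly a b δ).eval x * x ^ (2 ^ d - 1) = x ^ 2 ^ d * (y ^ 2 + y) := by
    rw [eval_curvePoly hx hxy, mul_right_comm, mul_pow_sub_one (by positivity)]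
  simp only [curveNormalForm, LinearMap.coe_mk, AddHom.coe_mk, Matrix.cons_val_zero,
    Matrix.cons_val_one, eval_add, eval_mul, eval_pow, eval_X, hcurve,
    eval_curveFrobPoly d hx hxy, Fin.sum_univ_two, Fin.val_zero, Fin.val_one, pow_zero, pow_one]
  linear_combination (x ^ 2 ^ d * y * (G 0 1).eval x
    + x ^ 2 ^ d * (y ^ 2 + y) * (G 1 1).eval x) * CharTwo.two_eq_zero (R := k)

variable {d}

variable (b δ) in
/-- There are `4 h (h + 1)` unknowns against `2 (h s + h + 1)` coefficients, where `h = 2 ^ d` and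
`s = 2 h`. -/
lemma exists_ne_zero_curveNormalForm_swappedDigitPoly_eq_zero (hd : d ≠ 0) (ha : a ≠ 0) :
    ∃ c : Fin 2 → Fin 2 → Fin (2 ^ d + 1) × Fin (2 ^ d) → k, c ≠ 0 ∧
      curveNormalForm d a b δ (fun i j ↦ swappedDigitPoly (2 ^ d) (2 ^ (d + 1)) (c j i)) = 0 := by
  have htwo : 2 ≤ 2 ^ d := Nat.le_self_pow hd 2
  let swap : (Fin 2 → Fin 2 → Fin (2 ^ d + 1) × Fin (2 ^ d) → k) →ₗ[k] (Fin 2 → Fin 2 → k[X]) :=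
    LinearMap.pi fun i ↦ LinearMap.pi fun j ↦
      swappedDigitPoly (2 ^ d) (2 ^ (d + 1)) ∘ₗ LinearMap.proj i ∘ₗ LinearMap.proj j
  obtain ⟨c, hc, hzero⟩ := exists_ne_zero_forall_eq_zero_of_natDegree_lt
    (N := 2 ^ (d + 1) + (2 ^ d + (2 ^ d - 1) * 2 ^ (d + 1)) + 1)
    (fun l ↦ LinearMap.proj l ∘ₗ (curveNormalForm d a b δ).restrictScalars k ∘ₗ swap)
    (fun l c ↦ Nat.lt_succ_of_le <| natDegree_curveNormalForm_le d b δ ha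
      (fun i j ↦ natDegree_swappedDigitPoly_le (c j i)) l) (by
      obtain ⟨h, hh⟩ := Nat.exists_eq_add_of_le' (one_le_two.trans htwo)
      simp only [Module.finrank_pi, Module.finrank_pi_fintype, Fintype.card_prod, Fintype.card_fin,
        Fin.sum_const, smul_eq_mul, pow_succ, hh, Nat.add_sub_cancel]
      nlinarith)
  exact ⟨c, hc, funext hzero⟩

/-- On the points over `k`, raising to the power `2 ^ (d + 1)` exchanges the digits of the exponents
of `x` and the factors `y` and `y ^ (2 ^ (d + 1))`. -/
lemma eval_curveNormalForm_digitPoly_eq_zero [CharP k 2] [Fintype k]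
    (hk : Fintype.card k = (2 ^ (d + 1)) ^ 2)
    {c : Fin 2 → Fin 2 → Fin (2 ^ d + 1) × Fin (2 ^ d) → k}
    (hc : curveNormalForm d a b δ
      (fun i j ↦ swappedDigitPoly (2 ^ d) (2 ^ (d + 1)) (c j i)) = 0)
    {x y : k} (hx : x ≠ 0) (hxy : y ^ 2 + y = a * x + b / x + δ) :
    let G i j := digitPoly (2 ^ d) (2 ^ (d + 1)) (c i j ^ 2 ^ (d + 1))
    (curveNormalForm d a b δ G 0).eval x + (curveNormalForm d a b δ G 1).eval x * y = 0 := by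
  intro G
  have hy : (y ^ 2 ^ (d + 1)) ^ 2 ^ (d + 1) = y := by
    rw [← pow_mul, ← sq, ← hk, FiniteField.pow_card]
  have hswap := eval_curveNormalForm d hx hxy
    (fun i j ↦ swappedDigitPoly (2 ^ d) (2 ^ (d + 1)) (c j i))
  rw [hc, Finset.sum_comm] at hswap
  rw [eval_curveNormalForm d hx hxy]
  refine mul_eq_zero_of_right _ (eq_zero_of_pow_eq_zero (n := 2 ^ (d + 1)) ?_)
  refine (mul_eq_zero_iff_left (pow_ne_zero (2 ^ d) hx)).mp ?_
  calc x ^ 2 ^ d * (∑ i, ∑ j,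
        (G i j).eval x * y ^ (i : ℕ) * (y ^ 2 ^ (d + 1)) ^ (j : ℕ)) ^ 2 ^ (d + 1)
    _ = x ^ 2 ^ d * ∑ i, ∑ j, (swappedDigitPoly (2 ^ d) (2 ^ (d + 1)) (c i j)).eval x
          * y ^ (j : ℕ) * (y ^ 2 ^ (d + 1)) ^ (i : ℕ) := by
      simp only [sum_pow_char_pow, mul_pow, pow_right_comm _ _ (2 ^ (d + 1)), hy]
      simp only [G, ← eval_digitPoly_pow hk, mul_right_comm]
      rfl
    _ = 0 := by simpa using hswap.symm

lemma eq_zero_of_curveNormalForm_digitPoly_eq_zero (ha : a ≠ 0)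
    {c : Fin 2 → Fin 2 → Fin (2 ^ d + 1) × Fin (2 ^ d) → k}
    (hc : curveNormalForm d a b δ
      (fun i j ↦ digitPoly (2 ^ d) (2 ^ (d + 1)) (c i j)) = 0) : c = 0 := by
  have split {u v} := eq_zero_of_X_pow_mul_digitPoly_add_mul_digitPoly_eq_zero (u := u) (v := v)
    (by positivity) (pow_succ' 2 d) (natDegree_curveFrobPoly d b δ ha)
  have hlin := congrFun hc 1
  have hconst := congrFun hc 0
  simp only [curveNormalForm, LinearMap.coe_mk, AddHom.coe_mk, Matrix.cons_val_zero,
    Matrix.cons_val_one, ← map_add, Pi.zero_apply] at hlin hconst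
  obtain ⟨hsum, h11⟩ := split hlin
  rw [h11, map_zero, mul_zero, add_zero] at hconst
  obtain ⟨h00, h01⟩ := split hconst
  have h10 : c 1 0 = 0 := by simpa only [h01, h11, zero_add, add_zero] using hsum
  exact funext₂ (Fin.forall_fin_two.mpr
    ⟨Fin.forall_fin_two.mpr ⟨h00, h01⟩, Fin.forall_fin_two.mpr ⟨h10, h11⟩⟩)

/-- With `(x, y)` also `(x, y + 1)` lies on the curve, so both components of the normal form of a
function vanishing on the curve vanish at `x`. -/
theorem card_le_of_exists_sq_add_self_eq [CharP k 2] [Fintype k] (hd : d ≠ 0)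
    (hk : Fintype.card k = (2 ^ (d + 1)) ^ 2) (ha : a ≠ 0) {S : Finset k}
    (hS : ∀ x ∈ S, x ≠ 0 ∧ ∃ y, y ^ 2 + y = a * x + b / x + δ) :
    S.card ≤ 2 ^ (d + 1) + (2 ^ d * 2 ^ (d + 1) + 2 ^ d) := by
  obtain ⟨c, hc, hswap⟩ := exists_ne_zero_curveNormalForm_swappedDigitPoly_eq_zero b δ hd ha
  set G : Fin 2 → Fin 2 → k[X] :=
    fun i j ↦ digitPoly (2 ^ d) (2 ^ (d + 1)) (c i j ^ 2 ^ (d + 1)) with hG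
  have hvanish (x) (hx : x ∈ S) (l : Fin 2) : (curveNormalForm d a b δ G l).eval x = 0 := by
    obtain ⟨hx0, y, hxy⟩ := hS x hx
    have hxy' : (y + 1) ^ 2 + (y + 1) = a * x + b / x + δ := by
      linear_combination hxy + (y + 1) * CharTwo.two_eq_zero (R := k)
    have hy := eval_curveNormalForm_digitPoly_eq_zero hk hswap hx0 hxy
    have hy' := eval_curveNormalForm_digitPoly_eq_zero hk hswap hx0 hxy'
    have hlin : (curveNormalForm d a b δ G 1).eval x = 0 := by linear_combination hy' - hy
    fin_cases l
    · simpa [← hG, hlin] using hy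
    · exact hlin
  obtain ⟨l, hl⟩ : ∃ l, curveNormalForm d a b δ G l ≠ 0 := by
    by_contra! hzero
    have hpow := eq_zero_of_curveNormalForm_digitPoly_eq_zero ha (funext hzero)
    exact hc (funext₂ fun i j ↦ eq_zero_of_pow_eq_zero (congrFun₂ hpow i j))
  exact (card_le_degree_of_subset_roots fun x hx ↦ (mem_roots hl).mpr (hvanish x hx l)).trans
    (natDegree_curveNormalForm_le d b δ ha (fun i j ↦ natDegree_digitPoly_le _) l)

end Stepanov

section FiniteExtension

variable {k K : Type*} [Field k] [Fintype k] [Field K] [Finite K] [Algebra k K]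

lemma exists_algebraMap_eq_of_pow_card_eq {z : K} (hz : z ^ Fintype.card k = z) :
    ∃ x, algebraMap k K x = z := by
  refine (IsGalois.mem_range_algebraMap_iff_fixed z).mpr fun σ ↦ ?_
  obtain ⟨i, rfl⟩ := (FiniteField.bijective_frobeniusAlgEquivOfAlgebraic_pow k K).surjective σ
  rw [AlgEquiv.coe_pow]
  exact Function.iterate_fixed (by simpa using hz) i

/-- Additive Hilbert 90 for finite fields. -/
lemma exists_pow_card_sub_self_eq_of_trace_eq_zero {c : K} (hc : Algebra.trace k K c = 0) :
    ∃ y, y ^ Fintype.card k - y = c := by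
  let frob := FiniteField.frobeniusAlgEquivOfAlgebraic k K
  let φ : K →ₗ[k] K := frob.toLinearMap - LinearMap.id
  have hle : LinearMap.range φ ≤ LinearMap.ker (Algebra.trace k K) := by
    rintro _ ⟨y, rfl⟩
    simp [φ, Algebra.trace_eq_of_algEquiv]
  have hker : Module.finrank k (LinearMap.ker φ) ≤ 1 := by
    have hfixed : LinearMap.ker φ ≤ LinearMap.range (Algebra.linearMap k K) := fun y hy ↦
      exists_algebraMap_eq_of_pow_card_eq (by simpa [φ, frob, sub_eq_zero] using hy)
    simpa using (Submodule.finrank_mono hfixed).trans (LinearMap.finrank_range_le _)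
  have hrank := LinearMap.finrank_range_add_finrank_ker φ
  have hrank_trace := LinearMap.finrank_range_add_finrank_ker (Algebra.trace k K)
  rw [LinearMap.range_eq_top.mpr (Algebra.trace_surjective k K), finrank_top,
    Module.finrank_self] at hrank_trace
  obtain ⟨y, hy⟩ : c ∈ LinearMap.range φ := by
    rwa [Submodule.eq_of_le_of_finrank_le hle (by omega)]
  exact ⟨y, by simpa [φ, frob] using hy⟩

end FiniteExtension

section QuadraticExtension

variable {k K : Type*} [Field k] [Field K] [Algebra k K]

lemma algebraMap_trace_eq_add_pow_card [Fintype k] [Finite K] (hK : Module.finrank k K = 2)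
    (z : K) : algebraMap k K (Algebra.trace k K z) = z + z ^ Fintype.card k := by
  simp [FiniteField.algebraMap_trace_eq_sum_pow, hK, Finset.sum_range_succ]

lemma algebraMap_norm_eq_mul_pow_card [Fintype k] [Finite K] (hK : Module.finrank k K = 2)
    (z : K) : algebraMap k K (Algebra.norm k z) = z * z ^ Fintype.card k := by
  simp [FiniteField.algebraMap_norm_eq_prod_pow, hK, Finset.prod_range_succ]

lemma trace_inv_eq_trace_div_norm (hK : Module.finrank k K = 2) (z : K) :
    Algebra.trace k K z⁻¹ = Algebra.trace k K z / Algebra.norm k z := by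
  have : Module.Finite k K := Module.finite_of_finrank_pos (hK ▸ two_pos)
  let e := Module.finBasisOfFinrankEq k K hK
  rcases eq_or_ne z 0 with rfl | hz
  · simp
  have hinv : Algebra.leftMulMatrix e z⁻¹ = (Algebra.leftMulMatrix e z)⁻¹ :=
    (Matrix.inv_eq_right_inv (by rw [← map_mul, mul_inv_cancel₀ hz, map_one])).symm
  rw [Algebra.trace_eq_matrix_trace e, Algebra.trace_eq_matrix_trace e,
    Algebra.norm_eq_matrix_det e, hinv, Matrix.inv_def, Ring.inverse_eq_inv', Matrix.trace_smul,
    Matrix.adjugate_fin_two, Matrix.trace_fin_two_of, Matrix.trace_fin_two, smul_eq_mul,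
    div_eq_inv_mul, add_comm]

lemma exists_mul_sub_eq_algebraMap [Finite K] (hK : Module.finrank k K = 2) (t u : k) :
    ∃ z : K, z * (algebraMap k K t - z) = algebraMap k K u := by
  let p : k[X] := C 1 * X ^ 2 + C (-t) * X + C u
  have hp : p.natDegree = 2 := natDegree_quadratic one_ne_zero
  obtain ⟨g, hg, hgp⟩ := exists_irreducible_of_natDegree_ne_zero (f := p) (by omega)
  have := Fact.mk hg
  have hdvd : Module.finrank k (AdjoinRoot g) ∣ Module.finrank k K := by
    rw [(AdjoinRoot.powerBasis hg.ne_zero).finrank, AdjoinRoot.powerBasis_dim, hK]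
    have hle := natDegree_le_of_dvd hgp (ne_zero_of_natDegree_gt (n := 0) (by omega))
    have hpos := hg.natDegree_pos
    rw [hp] at hle
    interval_cases g.natDegree <;> decide
  obtain ⟨φ⟩ := FiniteField.nonempty_algHom_of_finrank_dvd hdvd
  refine ⟨φ (AdjoinRoot.root g), ?_⟩
  have hroot : aeval (φ (AdjoinRoot.root g)) p = 0 := by
    rw [aeval_algHom_apply, AdjoinRoot.aeval_eq, AdjoinRoot.mk_eq_zero.mpr hgp, map_zero]
  simp only [p, map_add, map_mul, map_pow, aeval_C, aeval_X, map_one, map_neg] at hroot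
  linear_combination -hroot

variable [Fintype k]

lemma trace_eq_and_norm_eq_iff [Finite K] (hK : Module.finrank k K = 2) (t u : k) (z : K) :
    Algebra.trace k K z = t ∧ Algebra.norm k z = u ↔
      z * (algebraMap k K t - z) = algebraMap k K u ∧
        z ^ Fintype.card k = algebraMap k K t - z := by
  rw [← (algebraMap k K).injective.eq_iff, ← (algebraMap k K).injective.eq_iff (b := u),
    algebraMap_trace_eq_add_pow_card hK, algebraMap_norm_eq_mul_pow_card hK, ← eq_sub_iff_add_eq']
  refine ⟨fun ⟨hconj, hnorm⟩ ↦ ⟨hconj ▸ hnorm, hconj⟩, fun ⟨hroot, hconj⟩ ↦ ⟨hconj, ?_⟩⟩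
  rw [hconj, hroot]

lemma pow_card_eq_or_eq_sub_of_mul_sub_eq {t u : k} {z : K}
    (hz : z * (algebraMap k K t - z) = algebraMap k K u) :
    z ^ Fintype.card k = z ∨ z ^ Fintype.card k = algebraMap k K t - z := by
  have hpow := congrArg (FiniteField.frobeniusAlgHom k K) hz
  simp only [map_mul, map_sub, AlgHom.commutes, FiniteField.coe_frobeniusAlgHom] at hpow
  have hprod : (z ^ Fintype.card k - z) * (z ^ Fintype.card k - (algebraMap k K t - z)) = 0 := by
    linear_combination hz - hpow
  simpa only [sub_eq_zero] using mul_eq_zero.mp hprod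

variable [Fintype K]

lemma card_add_mul_eq [DecidableEq k] [DecidableEq K] (t u : k) :
    Finset.card {p : k × k | p.1 + p.2 = t ∧ p.1 * p.2 = u} =
      Finset.card {z : K | z * (algebraMap k K t - z) = algebraMap k K u
        ∧ z ^ Fintype.card k = z} := by
  refine Finset.card_nbij (fun p ↦ algebraMap k K p.1) ?_ ?_ ?_
  · rintro ⟨x, y⟩ hxy
    obtain ⟨rfl, rfl⟩ : x + y = t ∧ x * y = u := by simpa using hxy
    simp [← map_pow, FiniteField.pow_card]
  · rintro ⟨x, y⟩ hxy ⟨x', y'⟩ hxy' heq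
    obtain rfl : x = x' := (algebraMap k K).injective heq
    simp_all [← eq_sub_iff_add_eq']
  · rintro z hz
    obtain ⟨hroot, hfixed⟩ : z * (algebraMap k K t - z) = algebraMap k K u
      ∧ z ^ Fintype.card k = z := by simpa using hz
    obtain ⟨x, rfl⟩ := exists_algebraMap_eq_of_pow_card_eq hfixed
    refine ⟨(x, t - x), ?_, rfl⟩
    have hx : x * (t - x) = u := (algebraMap k K).injective (by simpa using hroot)
    simpa using hx

/-- Both counts are counts of roots `z` of `z (t - z) = u` in `K`: Frobenius exchanges the two
roots in the first case and fixes them in the second one. -/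
lemma card_trace_norm_eq_add_card_add_mul_eq [DecidableEq k] (hK : Module.finrank k K = 2)
    (t u : k) :
    Finset.card {z : K | Algebra.trace k K z = t ∧ Algebra.norm k z = u}
      + Finset.card {p : k × k | p.1 + p.2 = t ∧ p.1 * p.2 = u} = 2 := by
  classical
  obtain ⟨z, hz⟩ := exists_mul_sub_eq_algebraMap hK t u
  obtain ⟨conj, hconj⟩ : ∃ conj : K → K, ∀ w, algebraMap k K t - w = conj w :=
    ⟨_, fun _ ↦ rfl⟩
  have hconj_conj : conj (conj z) = z := by simp [← hconj]
  have hroots : ({w | w * conj w = algebraMap k K u} : Finset K) = {z, conj z} := by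
    ext w
    have hprod : w * conj w = algebraMap k K u ↔ (w - z) * (w - conj z) = 0 := by
      rw [← hz, ← hconj, ← hconj]
      constructor <;> intro h <;> linear_combination -h
    simp [hprod, sub_eq_zero]
  have hfrob (w) (hw : w ∈ ({z, conj z} : Finset K)) :
      w ^ Fintype.card k = w ∨ w ^ Fintype.card k = conj w := by
    rw [← hroots, Finset.mem_filter_univ, ← hconj] at hw
    exact hconj w ▸ pow_card_eq_or_eq_sub_of_mul_sub_eq hw
  simp_rw [trace_eq_and_norm_eq_iff hK, card_add_mul_eq (K := K), ← Finset.filter_filter, hconj]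
  rw [hroots]
  simp only [Finset.forall_mem_insert, Finset.mem_singleton, forall_eq, hconj_conj] at hfrob
  rcases eq_or_ne z (conj z) with hdouble | hne
  · have hfixed : z ^ Fintype.card k = z := by simpa [← hdouble] using hfrob.1
    simp [← hdouble, Finset.filter_singleton, hfixed]
  · rw [Finset.card_filter, Finset.card_filter, Finset.sum_pair hne, Finset.sum_pair hne,
      hconj_conj]
    rcases hfrob with ⟨hz | hz, hz' | hz'⟩ <;> simp [hz, hz', hne, hne.symm]

/-- In each fibre of `(trace, norm)` on `K` and of `(sum, product)` on `k × k` the two counts add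
up to two. -/
lemma sum_trace_norm_add_sum_add_mul {R : Type*} [CommRing R] (hK : Module.finrank k K = 2)
    (f : k → k → R) :
    ∑ z : K, f (Algebra.trace k K z) (Algebra.norm k z) + ∑ x, ∑ y, f (x + y) (x * y) =
      2 * ∑ t, ∑ u, f t u := by
  classical
  have hleft := Finset.sum_fiberwise' (.univ : Finset K)
    (fun z ↦ (Algebra.trace k K z, Algebra.norm k z)) (fun p ↦ f p.1 p.2)
  have hright := Finset.sum_fiberwise' (.univ : Finset (k × k))
    (fun p ↦ (p.1 + p.2, p.1 * p.2)) (fun p ↦ f p.1 p.2)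
  simp only [← Fintype.sum_prod_type'] at *
  rw [← hleft, ← hright, ← Finset.sum_add_distrib, Finset.mul_sum]
  refine Finset.sum_congr rfl fun ⟨t, u⟩ _ ↦ ?_
  simp only [Finset.sum_const, Prod.mk.injEq]
  rw [← add_smul, card_trace_norm_eq_add_card_add_mul_eq hK, two_smul, two_mul]

end QuadraticExtension

section KloostermanSum

variable {k R : Type*} [Field k] [Fintype k] [CommRing R] (ψ : AddChar k R)

open Classical in
/-- The Kloosterman sum `∑ ψ (a x + b / x)` over the nonzero elements of a finite field. -/
def kloostermanSum (a b : k) : R := ∑ x with x ≠ 0, ψ (a * x + b / x)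

lemma kloostermanSum_eq_sum_ite [DecidableEq k] (a b : k) :
    kloostermanSum ψ a b = ∑ x, if x = 0 then 0 else ψ (a * x + b / x) := by
  simp only [kloostermanSum, Finset.sum_filter, ite_not]
  congr!

lemma sum_mul_add_div_eq_kloostermanSum_add_one (a b : k) :
    ∑ x, ψ (a * x + b / x) = kloostermanSum ψ a b + 1 := by
  classical
  rw [kloostermanSum_eq_sum_ite, Fintype.sum_eq_add_sum_compl 0,
    Fintype.sum_eq_add_sum_compl (f := fun x ↦ ite _ _ _) 0, if_pos rfl, zero_add, add_comm]
  congr 1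
  · exact Finset.sum_congr rfl fun x hx ↦ (if_neg (by simpa using hx)).symm
  · simp

lemma kloostermanSum_zero_left [IsDomain R] (hψ : ψ.IsPrimitive) {b : k} (hb : b ≠ 0) :
    kloostermanSum ψ 0 b = -1 := by
  classical
  have hsum := AddChar.sum_mulShift b hψ
  rw [if_neg hb, Nat.cast_zero, ← Equiv.sum_comp (Equiv.inv k)] at hsum
  rw [eq_neg_iff_add_eq_zero, ← sum_mul_add_div_eq_kloostermanSum_add_one, ← hsum]
  simp [div_eq_inv_mul]

variable {K : Type*} [Field K] [Fintype K] [Algebra k K]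

omit [Fintype k] in
lemma kloostermanSum_compAddMonoidHom_trace [DecidableEq k] (hK : Module.finrank k K = 2)
    (a b : k) :
    kloostermanSum (ψ.compAddMonoidHom (Algebra.trace k K).toAddMonoidHom)
        (algebraMap k K a) (algebraMap k K b) =
      ∑ z : K, if Algebra.norm k z = 0 then 0
        else ψ (a * Algebra.trace k K z + b * (Algebra.trace k K z / Algebra.norm k z)) := by
  classical
  rw [kloostermanSum_eq_sum_ite]
  refine Finset.sum_congr rfl fun z _ ↦ ?_
  rw [← trace_inv_eq_trace_div_norm hK]
  simp [Algebra.norm_eq_zero_iff, div_eq_mul_inv, ← Algebra.smul_def]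

lemma kloostermanSum_sq [DecidableEq k] (a b : k) :
    kloostermanSum ψ a b ^ 2 = ∑ x, ∑ y, if x * y = 0 then 0
      else ψ (a * (x + y) + b * ((x + y) / (x * y))) := by
  rw [kloostermanSum_eq_sum_ite, sq, Finset.sum_mul_sum]
  refine Finset.sum_congr rfl fun x _ ↦ Finset.sum_congr rfl fun y _ ↦ ?_
  by_cases hx : x = 0
  · simp [hx]
  by_cases hy : y = 0
  · simp [hy]
  rw [if_neg hx, if_neg hy, if_neg (mul_ne_zero hx hy), ← AddChar.map_add_eq_mul]
  congr 1
  field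

variable {ψ} in
lemma sum_sum_ite_addChar_mul_add_mul_div [IsDomain R] [DecidableEq k] (hψ : ψ.IsPrimitive)
    {a b : k} (ha : a ≠ 0) (hb : b ≠ 0) :
    ∑ t, ∑ u, (if u = 0 then 0 else ψ (a * t + b * (t / u))) = (Fintype.card k : R) := by
  have hinner (u : k) : ∑ t, (if u = 0 then 0 else ψ (a * t + b * (t / u))) =
      if u = -(b / a) then (Fintype.card k : R) else 0 := by
    by_cases hu : u = 0
    · simp [hu, eq_comm (a := (0 : k)), ha, hb]
    have hiff : a + b / u = 0 ↔ u = -(b / a) := by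
      rw [eq_neg_iff_add_eq_zero, ← mul_right_inj' hu, ← mul_right_inj' ha (c := 0)]
      field_simp
      simp only [mul_zero]
    have hsum := AddChar.sum_mulShift (a + b / u) hψ
    simp only [hiff, Nat.cast_ite, Nat.cast_zero] at hsum
    rw [← hsum]
    refine Finset.sum_congr rfl fun t _ ↦ ?_
    rw [if_neg hu]
    congr 1
    ring
  rw [Finset.sum_comm]
  simp [hinner]

variable {ψ} in
theorem kloostermanSum_trace_add_sq [IsDomain R] (hψ : ψ.IsPrimitive)
    (hK : Module.finrank k K = 2) {a b : k} (ha : a ≠ 0) (hb : b ≠ 0) :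
    kloostermanSum (ψ.compAddMonoidHom (Algebra.trace k K).toAddMonoidHom)
        (algebraMap k K a) (algebraMap k K b) + kloostermanSum ψ a b ^ 2 =
      2 * Fintype.card k := by
  classical
  rw [kloostermanSum_compAddMonoidHom_trace ψ hK, kloostermanSum_sq,
    ← sum_sum_ite_addChar_mul_add_mul_div hψ ha hb]
  exact sum_trace_norm_add_sum_add_mul hK fun t u ↦
    if u = 0 then 0 else ψ (a * t + b * (t / u))

end KloostermanSum

section TraceCharacter

/-- The character `a ↦ (-1) ^ a` of `𝔽₂`. -/
def signChar : AddChar (ZMod 2) ℝ := AddChar.zmodChar 2 neg_one_sq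

lemma signChar_one : signChar 1 = -1 := by
  simp [signChar, AddChar.zmodChar_apply, ZMod.val_one]

lemma signChar_eq_one_sub (a : ZMod 2) : signChar a = 1 - 2 * if a = 1 then 1 else 0 := by
  obtain rfl | rfl : a = 0 ∨ a = 1 := by
    revert a
    decide
  · simp
  · norm_num [signChar_one]

variable (k : Type*) [Field k] [Algebra (ZMod 2) k]

/-- The character `x ↦ (-1) ^ tr x` of a finite field of characteristic two. -/
def traceChar : AddChar k ℝ :=
  signChar.compAddMonoidHom (Algebra.trace (ZMod 2) k).toAddMonoidHom

variable {k}

lemma traceChar_apply (x : k) : traceChar k x = signChar (Algebra.trace (ZMod 2) k x) := rfl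

lemma isPrimitive_traceChar [Finite k] : (traceChar k).IsPrimitive := by
  refine .of_ne_one fun htriv ↦ ?_
  obtain ⟨x, hx⟩ := Algebra.trace_surjective (ZMod 2) k 1
  have hx' := traceChar_apply x
  rw [htriv, hx, signChar_one, AddChar.one_apply] at hx'
  norm_num at hx'

lemma traceChar_compAddMonoidHom_trace {K : Type*} [Field K] [Algebra (ZMod 2) K] [Algebra k K]
    [IsScalarTower (ZMod 2) k K] [Finite k] [Finite K] :
    (traceChar k).compAddMonoidHom (Algebra.trace k K).toAddMonoidHom = traceChar K := by
  ext x
  simp [traceChar_apply]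

lemma exists_sq_add_self_eq_of_trace_eq_zero [Finite k] {c : k}
    (hc : Algebra.trace (ZMod 2) k c = 0) : ∃ y, y ^ 2 + y = c := by
  have := charP_of_injective_algebraMap (algebraMap (ZMod 2) k).injective 2
  simpa [ZMod.card, CharTwo.sub_eq_add] using exists_pow_card_sub_self_eq_of_trace_eq_zero hc

end TraceCharacter

section KloostermanBound

variable {k : Type*} [Field k] [Fintype k] [Algebra (ZMod 2) k] {a b : k}

lemma abs_kloostermanSum_traceChar_le_card (a b : k) :
    |kloostermanSum (traceChar k) a b| ≤ Fintype.card k := by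
  classical
  refine (Finset.abs_sum_le_sum_abs _ _).trans ?_
  simp only [← Real.norm_eq_abs, AddChar.norm_apply, Finset.sum_const, nsmul_eq_mul, mul_one]
  exact_mod_cast Finset.card_le_univ _

lemma kloostermanSum_traceChar_eq [DecidableEq k] (a b : k) :
    kloostermanSum (traceChar k) a b = Fintype.card k - 1 -
      2 * Finset.card {x | x ≠ 0 ∧ Algebra.trace (ZMod 2) k (a * x + b / x) = 1} := by
  have hcard : (Finset.card {x : k | x ≠ 0} : ℝ) = Fintype.card k - 1 := by
    rw [Finset.filter_ne', Finset.card_erase_of_mem (Finset.mem_univ _), Finset.card_univ,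
      Nat.cast_pred Fintype.card_pos]
  rw [← hcard]
  simp only [kloostermanSum, traceChar_apply, signChar_eq_one_sub, Finset.sum_sub_distrib,
    ← Finset.mul_sum, Finset.sum_boole, Finset.filter_filter, Finset.sum_const, nsmul_one]
  congr!

lemma neg_four_mul_le_kloostermanSum {s : ℕ} (hs : Fintype.card k = s ^ 2) (ha : a ≠ 0) :
    -(4 * s) ≤ kloostermanSum (traceChar k) a b := by
  classical
  have := charP_of_injective_algebraMap (algebraMap (ZMod 2) k).injective 2
  obtain ⟨e, rfl⟩ : ∃ e, s = 2 ^ e := by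
    obtain ⟨m, -, hm⟩ := FiniteField.card k 2
    obtain ⟨e, -, he⟩ := (Nat.dvd_prime_pow Nat.prime_two).mp
      (hm ▸ hs ▸ dvd_pow_self s two_ne_zero)
    exact ⟨e, he⟩
  rcases le_or_gt e 1 with he | he
  · have hle := neg_le_of_abs_le (abs_kloostermanSum_traceChar_le_card a b)
    have hpow : (2 ^ e : ℝ) ≤ 2 ^ 1 := pow_le_pow_right₀ one_le_two he
    rw [hs] at hle
    push_cast at hle ⊢
    nlinarith [pow_pos (two_pos (α := ℝ)) e]
  obtain ⟨d, rfl⟩ := Nat.exists_eq_add_of_lt he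
  obtain ⟨δ, hδ⟩ := Algebra.trace_surjective (ZMod 2) k 1
  have hcard := card_le_of_exists_sq_add_self_eq (d := 1 + d) (a := a) (b := b) (δ := δ)
    (S := {x | x ≠ 0 ∧ Algebra.trace (ZMod 2) k (a * x + b / x) = 1}) (by omega) hs ha (by
      intro x hx
      obtain ⟨hx0, hx1⟩ : x ≠ 0 ∧ Algebra.trace (ZMod 2) k (a * x + b / x) = 1 := by
        simpa using hx
      refine ⟨hx0, exists_sq_add_self_eq_of_trace_eq_zero ?_⟩
      rw [map_add, hx1, hδ, CharTwo.add_self_eq_zero])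
  have hcard' := (Nat.cast_le (α := ℝ)).mpr hcard
  have hone : (1 : ℝ) ≤ 2 ^ (1 + d) := one_le_pow₀ one_le_two
  rw [kloostermanSum_traceChar_eq, hs]
  push_cast [pow_succ _ (1 + d)] at hcard' ⊢
  linarith

lemma sq_kloostermanSum_le_of_forall_neg_mul_le {c : ℝ}
    (hc : ∀ (K : Type) [Field K] [Fintype K] [Algebra (ZMod 2) K] (s : ℕ) (a b : K),
      Fintype.card K = s ^ 2 → a ≠ 0 → b ≠ 0 → -(c * s) ≤ kloostermanSum (traceChar K) a b)
    (ha : a ≠ 0) (hb : b ≠ 0) :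
    kloostermanSum (traceChar k) a b ^ 2 ≤ (2 + c) * Fintype.card k := by
  have := charP_of_injective_algebraMap (algebraMap (ZMod 2) k).injective 2
  let K := FiniteField.Extension k 2 2
  have := Fintype.ofFinite K
  have hrel := kloostermanSum_trace_add_sq isPrimitive_traceChar
    (FiniteField.finrank_extension k 2 2) ha hb
  have hcard : Fintype.card K = Fintype.card k ^ 2 := by
    simpa only [Nat.card_eq_fintype_card] using FiniteField.natCard_extension k 2 2
  have hle := hc K _ (algebraMap k K a) (algebraMap k K b) hcard
    (by simpa using ha) (by simpa using hb)
  rw [traceChar_compAddMonoidHom_trace] at hrel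
  linarith

/-- Each passage to the quadratic extension improves the constant, since
`√(2 + (2 + ε)) ≤ 2 + ε / 4`. -/
lemma neg_two_add_mul_le_kloostermanSum (m : ℕ) :
    ∀ (K : Type) [Field K] [Fintype K] [Algebra (ZMod 2) K] (s : ℕ) (a b : K),
      Fintype.card K = s ^ 2 → a ≠ 0 → b ≠ 0 →
        -((2 + 2 / 4 ^ m) * s) ≤ kloostermanSum (traceChar K) a b := by
  induction m with
  | zero =>
    intro K _ _ _ s a b hs ha _
    have hle := neg_four_mul_le_kloostermanSum (b := b) hs ha
    norm_num at hle ⊢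
    exact hle
  | succ m ih =>
    intro K _ _ _ s a b hs ha hb
    refine neg_le_of_abs_le (abs_le_of_sq_le_sq ?_ (by positivity))
    have hε : (2 / 4 ^ m : ℝ) = 4 * (2 / 4 ^ (m + 1)) := by field
    calc kloostermanSum (traceChar K) a b ^ 2
      _ ≤ (2 + (2 + 2 / 4 ^ m)) * (s : ℝ) ^ 2 := by
        exact_mod_cast hs ▸ sq_kloostermanSum_le_of_forall_neg_mul_le ih ha hb
      _ ≤ ((2 + 2 / 4 ^ (m + 1)) * s) ^ 2 := by
        rw [mul_pow, hε]
        gcongr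
        linarith [sq_nonneg (2 / 4 ^ (m + 1) : ℝ)]

theorem abs_kloostermanSum_traceChar_le (hb : b ≠ 0) :
    |kloostermanSum (traceChar k) a b| ≤ 2 * √(Fintype.card k) := by
  have hcard : (1 : ℝ) ≤ Fintype.card k := mod_cast Fintype.card_pos
  refine abs_le_of_sq_le_sq ?_ (by positivity)
  rw [mul_pow, Real.sq_sqrt (by positivity)]
  rcases eq_or_ne a 0 with rfl | ha
  · rw [kloostermanSum_zero_left _ isPrimitive_traceChar hb]
    linarith
  have hlim : Filter.Tendsto (fun m : ℕ ↦ (2 + (2 + 2 / 4 ^ m)) * (Fintype.card k : ℝ)) .atTop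
      (nhds ((2 + (2 + 0)) * Fintype.card k)) := by
    refine ((Filter.Tendsto.const_add _ ?_).const_add _).mul_const _
    exact tendsto_const_nhds.div_atTop (tendsto_pow_atTop_atTop_of_one_lt (by norm_num))
  convert ge_of_tendsto' hlim fun m ↦
    sq_kloostermanSum_le_of_forall_neg_mul_le (neg_two_add_mul_le_kloostermanSum m) ha hb using 2
  norm_num

end KloostermanBound

section Kernel

variable {A B : Type*} [AddGroup A] [Fintype A] [AddGroup B] [DecidableEq B]

lemma card_filter_map_eq_zero (L : A →+ B) :
    Finset.card {x | L x = 0} = Nat.card L.ker :=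
  (Nat.subtype_card _ (by simp)).symm

lemma sum_ite_map_eq_zero (L : A →+ B) (c : ℝ) :
    ∑ x, (if L x = 0 then c else 0) = Nat.card L.ker * c := by
  rw [← Finset.sum_filter, Finset.sum_const, card_filter_map_eq_zero, nsmul_eq_mul]

end Kernel

section FourierTransform

variable {A k : Type*} [AddCommGroup A] [Fintype A] [Field k] {ψ : AddChar k ℝ}

lemma sum_addChar_mul_nonneg (L : A →+ k) (χ : AddChar A ℝ) (z : k) :
    0 ≤ ∑ x, ψ (z * L x) * χ x := by
  classical
  calc (0 : ℝ)
    _ ≤ ∑ x, (ψ.compAddMonoidHom ((AddMonoidHom.mulLeft z).comp L) * χ) x := by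
      rw [AddChar.sum_eq_ite]
      positivity
    _ = ∑ x, ψ (z * L x) * χ x := rfl

variable [Fintype k]

lemma sum_sum_mul_addChar_mul (hψ : ψ.IsPrimitive) (F : k → ℝ) (w : k) :
    ∑ z, (∑ y, F y * ψ (-z * y)) * ψ (z * w) = Fintype.card k * F w := by
  classical
  have horth (y : k) : ∑ z, F y * ψ (-z * y) * ψ (z * w) =
      if y = w then Fintype.card k * F w else 0 := by
    have hsum := AddChar.sum_mulShift (w - y) hψ
    simp only [mul_assoc, ← AddChar.map_add_eq_mul, ← Finset.mul_sum]
    split_ifs with hyw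
    · simp [hyw, mul_comm]
    · rw [if_neg (sub_ne_zero.mpr (Ne.symm hyw)), Nat.cast_zero] at hsum
      rw [← mul_zero (F y), ← hsum]
      congr! 3
      ring
  simp_rw [Finset.sum_mul]
  rw [Finset.sum_comm]
  simp_rw [horth]
  simp

lemma sum_sum_addChar_mul_le (hψ : ψ.IsPrimitive) (L : A →+ k) (χ : AddChar A ℝ) :
    ∑ z, ∑ x, ψ (z * L x) * χ x ≤ Nat.card L.ker * Fintype.card k := by
  classical
  rw [Finset.sum_comm, ← sum_ite_map_eq_zero]
  refine Finset.sum_le_sum fun x _ ↦ ?_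
  rw [← Finset.sum_mul, AddChar.sum_mulShift _ hψ]
  have hχ : χ x ≤ 1 := (le_abs_self _).trans (AddChar.norm_apply χ x).le
  split_ifs
  · exact mul_le_of_le_one_right (by positivity) hχ
  · simp

/-- Expand `F` into characters: after composition with `L`, the sums over `A` of the resulting
characters are nonnegative, so it suffices to add them up. -/
theorem abs_sum_comp_mul_addChar_le (hψ : ψ.IsPrimitive) {F : k → ℝ} {C : ℝ}
    (hF : ∀ z, |∑ y, F y * ψ (z * y)| ≤ C) (L : A →+ k) (χ : AddChar A ℝ) :
    |∑ x, F (L x) * χ x| ≤ Nat.card L.ker * C := by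
  have hcard : (0 : ℝ) < Fintype.card k := mod_cast Fintype.card_pos
  have hC : 0 ≤ C := (abs_nonneg _).trans (hF 0)
  have hexpand : Fintype.card k * ∑ x, F (L x) * χ x =
      ∑ z, (∑ y, F y * ψ (-z * y)) * ∑ x, ψ (z * L x) * χ x := by
    simp only [Finset.mul_sum, ← mul_assoc, ← sum_sum_mul_addChar_mul hψ, Finset.sum_mul _ _ (χ _)]
    exact Finset.sum_comm
  refine le_of_mul_le_mul_left ?_ hcard
  calc Fintype.card k * |∑ x, F (L x) * χ x|
    _ = |∑ z, (∑ y, F y * ψ (-z * y)) * ∑ x, ψ (z * L x) * χ x| := by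
      rw [← hexpand, abs_mul, abs_of_pos hcard]
    _ ≤ ∑ z, C * ∑ x, ψ (z * L x) * χ x := by
      refine (Finset.abs_sum_le_sum_abs _ _).trans (Finset.sum_le_sum fun z _ ↦ ?_)
      rw [abs_mul, abs_of_nonneg (sum_addChar_mul_nonneg L χ z)]
      exact mul_le_mul_of_nonneg_right (hF (-z)) (sum_addChar_mul_nonneg L χ z)
    _ ≤ C * (Nat.card L.ker * Fintype.card k) := by
      rw [← Finset.mul_sum]
      exact mul_le_mul_of_nonneg_left (sum_sum_addChar_mul_le hψ L χ) hC
    _ = Fintype.card k * (Nat.card L.ker * C) := by ring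

end FourierTransform

section ReciprocalSum

variable {A k : Type*} [AddCommGroup A] [Fintype A] [Field k] [Fintype k] [Algebra (ZMod 2) k]

lemma abs_sum_traceChar_div_mul_addChar_le {b : k} (hb : b ≠ 0) (L : A →+ k)
    (χ : AddChar A ℝ) :
    |∑ x, traceChar k (b / L x) * χ x| ≤ Nat.card L.ker * (2 * √(Fintype.card k) + 1) := by
  refine abs_sum_comp_mul_addChar_le (F := fun y ↦ traceChar k (b / y)) isPrimitive_traceChar
    (fun z ↦ ?_) L χ
  simp only [← AddChar.map_add_eq_mul, add_comm (b / _), sum_mul_add_div_eq_kloostermanSum_add_one]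
  refine (abs_add_le _ _).trans ?_
  rw [abs_one]
  gcongr
  exact abs_kloostermanSum_traceChar_le hb

end ReciprocalSum

section Derivative

variable {n : ℕ}

lemma der_add (f g : Fq n → ZMod 2) (a : Fq n) : der (f + g) a = der f a + der g a := by
  ext x
  simp only [der, Pi.add_apply]
  ring

lemma der_zero (a : Fq n) : der 0 a = 0 := by
  ext x
  simp [der]

lemma derIter_zero (l : List (Fq n)) : derIter 0 l = 0 := by
  induction l with
  | nil => rfl
  | cons a l ih => rw [derIter, ih, der_zero]

lemma derIter_append_singleton (f : Fq n → ZMod 2) (a : Fq n) (l : List (Fq n)) :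
    derIter f (l ++ [a]) = derIter (der f a) l := by
  induction l with
  | nil => rfl
  | cons b l ih => simp [derIter, ih]

lemma degLE_der {f : Fq n → ZMod 2} {r : ℕ} (hf : degLE f (r + 1)) (a : Fq n) :
    degLE (der f a) r := fun l hl ↦ by
  rw [← derIter_append_singleton]
  exact hf _ (by simp [hl])

lemma exists_addMonoidHom_eq_add_of_degLE_one {p : Fq n → ZMod 2} (hp : degLE p 1) :
    ∃ ℓ : Fq n →+ ZMod 2, ∀ x, p x = ℓ x + p 0 := by
  have hder (x y : Fq n) : p 0 + p y + (p x + p (x + y)) = 0 := by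
    simpa [derIter, der] using congrFun (hp [x, y] rfl) 0
  refine ⟨AddMonoidHom.mk' (fun x ↦ p x + p 0) fun x y ↦ ?_, fun x ↦ ?_⟩
  · linear_combination hder x y - (p x + p y + p 0) * CharTwo.two_eq_zero (R := ZMod 2)
  · simp [add_assoc, CharTwo.add_self_eq_zero]

lemma exists_degLE_nl_eq_hdist (r : ℕ) (f : Fq n → ZMod 2) :
    ∃ p, degLE p r ∧ nl r f = hdist f p := by
  have hne : {d | ∃ p, degLE p r ∧ d = hdist f p}.Nonempty :=
    ⟨_, 0, fun l _ ↦ derIter_zero l, rfl⟩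
  exact Nat.sInf_mem hne

end Derivative

section SignSum

/-- The sum `∑ (-1) ^ h x`, which measures how far the Boolean function `h` is from being
balanced. -/
def signSum {A : Type*} [Fintype A] (h : A → ZMod 2) : ℝ := ∑ x, signChar (h x)

lemma abs_signChar (a : ZMod 2) : |signChar a| = 1 := AddChar.norm_apply signChar a

lemma abs_signSum_le_card {A : Type*} [Fintype A] (h : A → ZMod 2) :
    |signSum h| ≤ Fintype.card A := by
  simpa [signSum, abs_signChar] using Finset.abs_sum_le_sum_abs (fun x ↦ signChar (h x)) .univ

variable {n : ℕ} [Fintype (Fq n)]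

lemma signSum_sq (h : Fq n → ZMod 2) : signSum h ^ 2 = ∑ a, signSum (der h a) := by
  simp only [signSum, der, AddChar.map_add_eq_mul]
  rw [sq, Finset.sum_mul_sum,
    Finset.sum_comm (f := fun a x ↦ signChar (h x) * signChar (h (x + a)))]
  refine Finset.sum_congr rfl fun x _ ↦ ?_
  exact (Equiv.sum_comp (.addLeft x) fun y ↦ signChar (h x) * signChar (h y)).symm

lemma abs_signSum_pow_two_mul_le (h : Fq n → ZMod 2) {N : ℕ} (hN : N ≠ 0) :
    |signSum h| ^ (2 * N) ≤
      (Fintype.card (Fq n) : ℝ) ^ (N - 1) * ∑ a, |signSum (der h a)| ^ N := by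
  obtain ⟨N, rfl⟩ := Nat.exists_eq_succ_of_ne_zero hN
  have hholder := pow_sum_div_card_le_sum_pow (s := .univ) (f := fun a ↦ |signSum (der h a)|)
    (fun a _ ↦ abs_nonneg _) N
  rw [div_le_iff₀' (by rw [Finset.card_univ]; positivity), Finset.card_univ] at hholder
  refine le_trans ?_ hholder
  rw [pow_mul, sq_abs, signSum_sq]
  exact pow_le_pow_left₀ (signSum_sq h ▸ sq_nonneg _)
    (Finset.sum_le_sum fun a _ ↦ le_abs_self _) _

lemma signSum_add_eq_card_sub_hdist (f g : Fq n → ZMod 2) :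
    signSum (f + g) = Fintype.card (Fq n) - 2 * hdist f g := by
  have hne (x : Fq n) : (f + g) x = 1 ↔ f x ≠ g x := by
    rw [Pi.add_apply]
    generalize f x = a
    generalize g x = b
    revert a b
    decide
  simp only [signSum, signChar_eq_one_sub, hne, Finset.sum_sub_distrib, ← Finset.mul_sum,
    Finset.sum_boole, Finset.sum_const, nsmul_one, Finset.card_univ, hdist,
    Set.ncard_eq_toFinset_card', Set.toFinset_ofFinset]
  congr!

end SignSum

section TraceOfReciprocal

/-- The additive map `x ↦ L x (L x + L a)`, which is the denominator of `1 / L x + 1 / L (x + a)`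
in characteristic two. -/
def derDenominator {A k : Type*} [AddCommGroup A] [Field k] [CharP k 2] (L : A →+ k) (a : A) :
    A →+ k :=
  AddMonoidHom.mk' (fun x ↦ L x * (L x + L a)) fun x y ↦ by
    rw [map_add]
    linear_combination L x * L y * CharTwo.two_eq_zero (R := k)

lemma card_ker_derDenominator_le {A k : Type*} [AddCommGroup A] [Finite A] [Field k] [CharP k 2]
    (L : A →+ k) (a : A) : Nat.card (derDenominator L a).ker ≤ 2 * Nat.card L.ker := by
  classical
  have := Fintype.ofFinite A
  have hshift : Finset.card {x | L (x + a) = 0} = Finset.card {x | L x = 0} :=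
    Finset.card_equiv (Equiv.addRight a) (by simp)
  rw [two_mul, ← card_filter_map_eq_zero, ← card_filter_map_eq_zero L]
  nth_rw 2 [← hshift]
  refine (Finset.card_le_card fun x hx ↦ ?_).trans (Finset.card_union_le _ _)
  simpa [derDenominator] using hx

variable {n : ℕ}

/-- The function `g` is given by `g x = tr (b / L x)` outside the kernel of `L`. -/
def IsTraceOfReciprocal (L : Fq n →+ Fq n) (b : Fq n) (g : Fq n → ZMod 2) : Prop :=
  ∀ x, L x ≠ 0 → g x = tr (b / L x)

variable {L : Fq n →+ Fq n} {b : Fq n} {g p : Fq n → ZMod 2}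

lemma isTraceOfReciprocal_der (hg : IsTraceOfReciprocal L b g) (a : Fq n) :
    IsTraceOfReciprocal (derDenominator L a) (b * L a) (der g a) := by
  intro x hx
  obtain ⟨hx, hxa⟩ := mul_ne_zero_iff.mp hx
  rw [der, hg x hx, hg (x + a) (by rwa [map_add]), map_add, tr, tr, tr, ← map_add]
  congr 1
  change b / L x + b / (L x + L a) = b * L a / (L x * (L x + L a))
  field_simp
  linear_combination b * L x * CharTwo.two_eq_zero (R := Fq n)

lemma isTraceOfReciprocal_id (hn : n ≠ 0) (hg : ∀ x, g x = tr (b * x ^ (2 ^ n - 2))) :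
    IsTraceOfReciprocal (.id _) b g := by
  intro x hx
  have := Fintype.ofFinite (Fq n)
  have hpow := FiniteField.pow_card_sub_one_eq_one x hx
  have hle : 2 ≤ 2 ^ n := Nat.le_self_pow hn 2
  rw [← Nat.card_eq_fintype_card, GaloisField.card 2 n hn,
    show 2 ^ n - 1 = 2 ^ n - 2 + 1 by omega, pow_succ] at hpow
  rw [hg, eq_inv_of_mul_eq_one_left hpow, div_eq_mul_inv, AddMonoidHom.id_apply]

variable [Fintype (Fq n)]

lemma abs_signSum_add_le_of_degLE_one (hb : b ≠ 0) (hg : IsTraceOfReciprocal L b g)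
    (hp : degLE p 1) :
    |signSum (g + p)| ≤ Nat.card L.ker * (2 * √(Fintype.card (Fq n)) + 3) := by
  classical
  obtain ⟨ℓ, hℓ⟩ := exists_addMonoidHom_eq_add_of_degLE_one hp
  let main (x : Fq n) : ℝ := traceChar (Fq n) (b / L x) * signChar.compAddMonoidHom ℓ x
  have habs (x : Fq n) : |signChar (p 0) * main x| = 1 := by
    simp [main, abs_mul, ← Real.norm_eq_abs, AddChar.norm_apply]
  have hdiff (x : Fq n) :
      |signChar ((g + p) x) - signChar (p 0) * main x| ≤ if L x = 0 then 2 else 0 := by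
    split_ifs with hx
    · refine (abs_sub _ _).trans_eq ?_
      rw [abs_signChar, habs]
      norm_num
    · rw [Pi.add_apply, hg x hx, hℓ x, AddChar.map_add_eq_mul, AddChar.map_add_eq_mul]
      simp only [main, traceChar_apply, tr, AddChar.compAddMonoidHom_apply]
      rw [mul_comm (signChar (ℓ x)), mul_left_comm, sub_self, abs_zero]
  calc |signSum (g + p)|
    _ = |∑ x, (signChar ((g + p) x) - signChar (p 0) * main x) + signChar (p 0) * ∑ x, main x| := by
      rw [Finset.mul_sum, ← Finset.sum_add_distrib, signSum]
      simp only [sub_add_cancel]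
    _ ≤ ∑ x, (if L x = 0 then 2 else 0) + |∑ x, main x| := by
      refine (abs_add_le _ _).trans (add_le_add ?_ ?_)
      · exact (Finset.abs_sum_le_sum_abs _ _).trans (Finset.sum_le_sum fun x _ ↦ hdiff x)
      · rw [abs_mul, abs_signChar, one_mul]
    _ ≤ Nat.card L.ker * 2 + Nat.card L.ker * (2 * √(Fintype.card (Fq n)) + 1) :=
      add_le_add (sum_ite_map_eq_zero L 2).le (abs_sum_traceChar_div_mul_addChar_le hb L _)
    _ = Nat.card L.ker * (2 * √(Fintype.card (Fq n)) + 3) := by ring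

theorem abs_signSum_add_pow_le (j : ℕ) (hb : b ≠ 0) (hg : IsTraceOfReciprocal L b g)
    (hp : degLE p (j + 1)) :
    |signSum (g + p)| ^ 2 ^ j ≤ (Fintype.card (Fq n) : ℝ) ^ (2 ^ j - 1) *
      (Nat.card L.ker * (2 ^ j * (2 * √(Fintype.card (Fq n)) + 4) - 1)) := by
  classical
  induction j generalizing L b g p with
  | zero =>
    have hbase := abs_signSum_add_le_of_degLE_one hb hg hp
    norm_num at hbase ⊢
    linarith
  | succ j ih =>
    set q : ℝ := (Fintype.card (Fq n) : ℝ)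
    have hpos : 0 ≤ (2 : ℝ) ^ j * (2 * √q + 4) - 1 := by
      have : (1 : ℝ) ≤ 2 ^ j := one_le_pow₀ one_le_two
      nlinarith [Real.sqrt_nonneg q]
    have hder (a : Fq n) : |signSum (der (g + p) a)| ^ 2 ^ j ≤
        q ^ (2 ^ j - 1) * (2 * Nat.card L.ker * (2 ^ j * (2 * √q + 4) - 1)) +
          if L a = 0 then q ^ 2 ^ j else 0 := by
      split_ifs with ha
      · refine le_add_of_nonneg_of_le (by positivity) ?_
        exact pow_le_pow_left₀ (abs_nonneg _) (abs_signSum_le_card _) _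
      · rw [add_zero, der_add]
        refine (ih (mul_ne_zero hb ha) (isTraceOfReciprocal_der hg a) (degLE_der hp a)).trans ?_
        gcongr
        exact mod_cast card_ker_derDenominator_le L a
    have hq : q ^ 2 ^ j = q * q ^ (2 ^ j - 1) := (mul_pow_sub_one (by positivity) q).symm
    have hexp : 2 ^ (j + 1) - 1 = 2 ^ j - 1 + 2 ^ j := by
      have := Nat.one_le_two_pow (n := j)
      omega
    rw [pow_succ' 2 j, ← pow_succ' 2 j, hexp, pow_add q, mul_assoc, pow_succ' 2 j]
    refine (abs_signSum_pow_two_mul_le _ (by positivity)).trans ?_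
    gcongr
    refine (Finset.sum_le_sum fun a _ ↦ hder a).trans_eq ?_
    rw [Finset.sum_add_distrib, sum_ite_map_eq_zero, Finset.sum_const, Finset.card_univ,
      nsmul_eq_mul, hq]
    ring

end TraceOfReciprocal

section Numerics

lemma two_mul_le_two_pow_sub_one {N : ℕ} (hN : 4 ≤ N) : 2 * N ≤ 2 ^ (N - 1) := by
  induction N, hN using Nat.le_induction with
  | base => norm_num
  | succ N hN ih =>
    rw [Nat.add_sub_cancel, ← mul_pow_sub_one (by omega : N ≠ 0) 2]
    omega

/-- Bernoulli's inequality for `(1 + 3 / s) ^ N` absorbs the terms of lower order. -/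
lemma le_mul_one_add_div_of_pow_le {u s M S : ℝ} {N : ℕ} (hN : 4 ≤ N) (hu : 0 ≤ u) (hs : 0 < s)
    (hM : 0 ≤ M) (hMN : M ^ N = u ^ (N - 1) * (2 ^ (N - 1) * s))
    (hS : S ^ N ≤ u ^ (N - 1) * (N * (2 * s + 4) - 1)) : S ≤ M * (1 + 3 / s) := by
  have hexp : 2 * (N : ℝ) ≤ 2 ^ (N - 1) := mod_cast two_mul_le_two_pow_sub_one hN
  have hN4 : (4 : ℝ) ≤ N := mod_cast hN
  have hbernoulli : 1 + N * (3 / s) ≤ (1 + 3 / s) ^ N :=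
    one_add_mul_le_pow (by linarith [div_pos three_pos hs]) N
  refine le_of_pow_le_pow_left₀ (by omega : N ≠ 0) (by positivity) ?_
  calc S ^ N
    _ ≤ u ^ (N - 1) * (N * (2 * s + 4) - 1) := hS
    _ ≤ u ^ (N - 1) * (2 ^ (N - 1) * (s + 3 * N)) := by
      gcongr
      nlinarith
    _ = M ^ N * (1 + N * (3 / s)) := by
      rw [hMN]
      field_simp
    _ ≤ (M * (1 + 3 / s)) ^ N := by
      rw [mul_pow]
      gcongr

lemma two_mul_two_rpow_pow (n : ℕ) {N : ℕ} (hN : N ≠ 0) :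
    (2 * (2 : ℝ) ^ ((1 - 1 / (2 * (N : ℝ))) * n - 1 / N)) ^ N =
      (2 ^ n) ^ (N - 1) * (2 ^ (N - 1) * √(2 ^ n)) := by
  have hpred : ((N - 1 : ℕ) : ℝ) = N - 1 := Nat.cast_pred (Nat.pos_of_ne_zero hN)
  nth_rw 1 [← Real.rpow_one 2]
  rw [← Real.rpow_add two_pos, ← pow_mul, Real.sqrt_eq_rpow]
  simp only [← Real.rpow_natCast, ← Real.rpow_mul zero_le_two, ← Real.rpow_add two_pos]
  congr 1
  push_cast [hpred]
  field_simp
  ring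

lemma two_rpow_div_sqrt_le (n N : ℕ) :
    (2 : ℝ) ^ ((1 - 1 / (2 * (N : ℝ))) * n - 1 / N) / √(2 ^ n) ≤
      (2 : ℝ) ^ ((1 / 2 - 1 / (2 * (N : ℝ))) * n) := by
  rw [Real.sqrt_eq_rpow, ← Real.rpow_natCast, ← Real.rpow_mul zero_le_two, ← Real.rpow_sub two_pos]
  refine Real.rpow_le_rpow_of_exponent_le one_le_two ?_
  have : 0 ≤ 1 / (N : ℝ) := by positivity
  linarith

lemma le_two_rpow_add_two_rpow_of_pow_le {n N : ℕ} (hN : 4 ≤ N) {S : ℝ}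
    (hS : S ^ N ≤ (2 ^ n) ^ (N - 1) * (N * (2 * √(2 ^ n) + 4) - 1)) :
    S ≤ 2 * (2 : ℝ) ^ ((1 - 1 / (2 * (N : ℝ))) * n - 1 / N) +
      6 * (2 : ℝ) ^ ((1 / 2 - 1 / (2 * (N : ℝ))) * n) := by
  refine (le_mul_one_add_div_of_pow_le hN (by positivity) (by positivity) (by positivity)
    (two_mul_two_rpow_pow n (by omega)) hS).trans ?_
  linear_combination 6 * two_rpow_div_sqrt_le n N

lemma two_rpow_neg_succ (j : ℕ) : (2 : ℝ) ^ (-((j + 1 : ℕ) : ℝ)) = 1 / (2 * ((2 ^ j : ℕ) : ℝ)) := by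
  rw [Real.rpow_neg zero_le_two, Real.rpow_natCast, pow_succ', one_div]
  norm_cast

end Numerics

theorem rth_order_nl_inverse_general (n r : ℕ) (hn : n ≠ 0) (hr : 3 ≤ r) (b : Fq n) (hb : b ≠ 0)
    (f : Fq n → ZMod 2) (hf : ∀ x, f x = tr (b * x ^ (2 ^ n - 2))) :
    (nl r f : ℝ) ≥ (2:ℝ) ^ ((n:ℝ) - 1)
      - (2:ℝ) ^ ((1 - (2:ℝ) ^ (-(r:ℝ))) * (n:ℝ) - (2:ℝ) ^ (-((r:ℝ) - 1)))
      - 3 * (2:ℝ) ^ ((1/2 - (2:ℝ) ^ (-(r:ℝ))) * (n:ℝ)) := by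
  let := Fintype.ofFinite (Fq n)
  obtain ⟨j, rfl⟩ : ∃ j, r = j + 1 := ⟨r - 1, by omega⟩
  have hcard : (Fintype.card (Fq n) : ℝ) = 2 ^ n := by
    rw [← Nat.card_eq_fintype_card, GaloisField.card 2 n hn, Nat.cast_pow, Nat.cast_ofNat]
  have hN : 4 ≤ 2 ^ j := Nat.pow_le_pow_right (n := 2) two_pos (by omega : 2 ≤ j)
  obtain ⟨p, hp, hnl⟩ := exists_degLE_nl_eq_hdist (j + 1) f
  have hpow := abs_signSum_add_pow_le j hb (isTraceOfReciprocal_id hn hf) hp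
  have hker : Nat.card (AddMonoidHom.id (Fq n)).ker = 1 := by simp [AddMonoidHom.ker_id]
  rw [hker, Nat.cast_one, one_mul, hcard, signSum_add_eq_card_sub_hdist, hcard, ← hnl] at hpow
  have hle := le_of_abs_le (le_two_rpow_add_two_rpow_of_pow_le (n := n) hN
    (S := |2 ^ n - 2 * (nl (j + 1) f : ℝ)|) (by push_cast; exact hpow))
  have hpred : -(((j + 1 : ℕ) : ℝ) - 1) = -j := by push_cast; ring
  rw [hpred, two_rpow_neg_succ, Real.rpow_sub_one two_ne_zero, Real.rpow_natCast,
    Real.rpow_neg zero_le_two, Real.rpow_natCast, ← one_div]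
  push_cast at hle ⊢
  linarith

/-- `r`-th order nonlinearity lower bound for the inverse function `tr(x^(2^n-2))`. -/
theorem rth_order_nl_inverse (n r : ℕ) (hr : 3 ≤ r) (hrn : r + 3 ≤ n)
    (f : Fq n → ZMod 2) (hf : ∀ x, f x = tr (x ^ (2 ^ n - 2))) :
    (nl r f : ℝ) ≥ (2:ℝ) ^ ((n:ℝ) - 1)
      - (2:ℝ) ^ ((1 - (2:ℝ) ^ (-(r:ℝ))) * (n:ℝ) - (2:ℝ) ^ (-((r:ℝ) - 1)))
      - 3 * (2:ℝ) ^ ((1/2 - (2:ℝ) ^ (-(r:ℝ))) * (n:ℝ)) :=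
  rth_order_nl_inverse_general n r (by omega) hr 1 one_ne_zero f (by simpa using hf)
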